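/- arXiv:2503.11506 — 3 statements merged into one kernel-verified Lean document; each statement's English description precedes it below -/
import Mathlib

section
/- Let V = ℝ^{2n} with coordinates (x_1, y_1, …, x_n, y_n), let dx_1, dy_1, …, dx_n, dy_n denote the dual basis of V*, and let ω = ∑_{i=1}^n dx_i ∧ dy_i ∈ ⋀^2 V*. For each integer 1 ≤ k ≤ n, the Lefschetz operator L^k : ⋀^{n−k} V* → ⋀^{n+k} V*, defined by L^k(ξ) = ξ ∧ ω^k (where ω^k denotes the k-fold wedge power ω ∧ ⋯ ∧ ω), is a linear isomorphism. -/
set_option synthInstance.maxHeartbeats 1000000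
set_option maxHeartbeats 1000000

/-- The `k`-th exterior power `⋀^k M`, realized as the `k`-th power of the image of `M`
inside the exterior algebra of `M`. -/
noncomputable def extPow (k : ℕ) (M : Type*) [AddCommGroup M] [Module ℝ M] :
    Submodule ℝ (ExteriorAlgebra ℝ M) :=
  (LinearMap.range (ExteriorAlgebra.ι ℝ : M →ₗ[ℝ] ExteriorAlgebra ℝ M)) ^ k

/-- The standard symplectic form `ω = ∑ dx_i ∧ dy_i ∈ ⋀² (ℝ^{2n})^*`, where
`dx_i = proj (2i)` and `dy_i = proj (2i+1)` form the dual basis of `(ℝ^{2n})^*`. -/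
noncomputable def symplForm (n : ℕ) :
    ExteriorAlgebra ℝ (Module.Dual ℝ (Fin (2*n) → ℝ)) :=
  ∑ j : Fin n,
    ExteriorAlgebra.ι ℝ
        (LinearMap.proj (⟨2*j.1, by have := j.2; omega⟩ : Fin (2*n)) :
          Module.Dual ℝ (Fin (2*n) → ℝ)) *
      ExteriorAlgebra.ι ℝ
        (LinearMap.proj (⟨2*j.1+1, by have := j.2; omega⟩ : Fin (2*n)) :
          Module.Dual ℝ (Fin (2*n) → ℝ))

/-!
Wedging with `ω` and contracting with the dual bivector generate an `sl₂`-action on the exterior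
algebra: by Euler's identity `∑ eᵢ ∧ (eᵢ* ⌟ x) = m x` for `x` of degree `m`, their commutator acts
on degree `m` as multiplication by `n - m`. Hence `Λ Lʳ⁺¹ x = Lʳ⁺¹ Λ x + (r + 1) (n - m - r) Lʳ x`,
where the scalar is nonzero as long as `m + r < n`. If `Lʳ⁺¹ x = 0`, induction on the exponent
gives `L Λ x = -c x` with `c ≠ 0`, so `Lʳ⁺² Λ x = 0`; induction on the degree then gives `Λ x = 0`,
and thus `x = 0`. Surjectivity follows because both exterior powers have the same dimension.
-/

theorem bijOn_of_injOn_of_finrank_eq {K E F : Type*} [Field K] [AddCommGroup E]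
    [Module K E] [AddCommGroup F] [Module K F] {f : E →ₗ[K] F} {p : Submodule K E}
    {q : Submodule K F} [FiniteDimensional K p] [FiniteDimensional K q]
    (hmaps : Set.MapsTo f p q) (hinj : Set.InjOn f p)
    (hrank : Module.finrank K p = Module.finrank K q) : Set.BijOn f p q := by
  have hinj' : Function.Injective (f.restrict hmaps) := hmaps.restrict_inj.mpr hinj
  have hsurj : Function.Surjective (f.restrict hmaps) :=
    (LinearMap.injective_iff_surjective_of_finrank_eq_finrank hrank).mp hinj'
  exact ⟨hmaps, hinj, hmaps.restrict_surjective_iff.mp hsurj⟩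

section LefschetzPair

variable {R E : Type*} [CommRing R] [AddCommGroup E] [Module R E]

/-- A Lefschetz pair of weight `n` on a family `V` of submodules: a raising operator `L` of
degree `2` and a lowering operator `Λ` of degree `-2` whose commutator is multiplication by
`n - m` on `V m`. This is a graded `sl₂`-representation, recorded without its Cartan element.
The family is indexed by `ℕ`, so vanishing of `Λ` into negative degrees is a separate field. -/
structure IsLefschetzPair (V : ℕ → Submodule R E) (L Λ : Module.End R E) (n : ℕ) : Prop where
  raise_mem : ∀ {m x}, x ∈ V m → L x ∈ V (m + 2)
  lower_mem : ∀ {m x}, x ∈ V (m + 2) → Λ x ∈ V m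
  lower_eq_zero : ∀ {m x}, m < 2 → x ∈ V m → Λ x = 0
  lower_raise : ∀ {m x}, x ∈ V m → Λ (L x) = L (Λ x) + ((n : R) - m) • x

namespace IsLefschetzPair

variable {V : ℕ → Submodule R E} {L Λ : Module.End R E} {n m : ℕ} {x : E}

theorem pow_raise_mem (h : IsLefschetzPair V L Λ n) (hx : x ∈ V m) (r : ℕ) :
    (L ^ r) x ∈ V (m + 2 * r) := by
  induction r with
  | zero => simpa using hx
  | succ r ih =>
    rw [pow_succ', Module.End.mul_apply]
    exact h.raise_mem ih

theorem raise_lower_mem (h : IsLefschetzPair V L Λ n) (hx : x ∈ V m) : L (Λ x) ∈ V m := by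
  obtain hm | ⟨m, rfl⟩ := (lt_or_ge m 2).imp_right Nat.exists_eq_add_of_le'
  · simp [h.lower_eq_zero hm hx]
  · exact h.raise_mem (h.lower_mem hx)

theorem lower_pow_raise (h : IsLefschetzPair V L Λ n) (hx : x ∈ V m) (r : ℕ) :
    Λ ((L ^ (r + 1)) x) =
      (L ^ (r + 1)) (Λ x) + (((r : R) + 1) * ((n : R) - m - r)) • (L ^ r) x := by
  induction r with
  | zero => simpa using h.lower_raise hx
  | succ r ih =>
    have raise_pow (s : ℕ) (y : E) : L ((L ^ s) y) = (L ^ (s + 1)) y := by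
      rw [pow_succ', Module.End.mul_apply]
    calc Λ ((L ^ (r + 2)) x)
        = Λ (L ((L ^ (r + 1)) x)) := by rw [raise_pow]
      _ = L (Λ ((L ^ (r + 1)) x)) + ((n : R) - (m + 2 * (r + 1) : ℕ)) • (L ^ (r + 1)) x :=
        h.lower_raise (h.pow_raise_mem hx _)
      _ = (L ^ (r + 2)) (Λ x) + (((r : R) + 1) * ((n : R) - m - r)) • (L ^ (r + 1)) x +
          ((n : R) - (m + 2 * (r + 1) : ℕ)) • (L ^ (r + 1)) x := by
        rw [ih, map_add, map_smul, raise_pow, raise_pow]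
      _ = _ := by
        rw [add_assoc, ← add_smul]
        congr 2
        push_cast
        ring

theorem eq_zero_of_pow_raise_eq_zero [IsDomain R] [CharZero R] [Module.IsTorsionFree R E]
    (h : IsLefschetzPair V L Λ n) {r : ℕ} (hmr : m + r ≤ n) (hx : x ∈ V m)
    (hrx : (L ^ r) x = 0) : x = 0 := by
  induction m using Nat.strong_induction_on generalizing r x with
  | _ m ih_degree =>
  induction r generalizing x with
  | zero => simpa using hrx
  | succ r ih_power =>
    set c : R := ((r : R) + 1) * ((n : R) - m - r) with hc_def
    have hc : c ≠ 0 := by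
      obtain ⟨d, rfl⟩ := Nat.exists_eq_add_of_le hmr
      have : c = ((r + 1) * (d + 1) : ℕ) := by
        rw [hc_def]
        push_cast
        ring
      rw [this]
      exact_mod_cast Nat.mul_ne_zero r.succ_ne_zero d.succ_ne_zero
    have raise_lower : L (Λ x) + c • x = 0 := by
      refine ih_power (by omega) (add_mem (h.raise_lower_mem hx) ((V m).smul_mem c hx)) ?_
      rw [map_add, map_smul, ← Module.End.mul_apply, ← pow_succ, ← h.lower_pow_raise hx, hrx,
        map_zero]
    have lower : Λ x = 0 := by
      obtain hm | ⟨m, rfl⟩ := (lt_or_ge m 2).imp_right Nat.exists_eq_add_of_le'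
      · exact h.lower_eq_zero hm hx
      · refine ih_degree m (by omega) (r := r + 2) (by omega) (h.lower_mem hx) ?_
        simpa [hrx, pow_succ L (r + 1)] using congrArg (L ^ (r + 1)) raise_lower
    rw [lower, map_zero, zero_add] at raise_lower
    exact (smul_eq_zero.mp raise_lower).resolve_left hc

end IsLefschetzPair

end LefschetzPair

section InteriorProduct

open ExteriorAlgebra

variable {R M : Type*} [CommRing R] [AddCommGroup M] [Module R M]

/-- The interior product of a covector with an element of the exterior algebra, obtained as the
left contraction on the Clifford algebra of the zero quadratic form. -/
noncomputable def interiorProd (d : Module.Dual R M) : Module.End R (ExteriorAlgebra R M) :=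
  CliffordAlgebra.contractLeft (Q := (0 : QuadraticForm R M)) d

theorem interiorProd_ι_mul (d : Module.Dual R M) (v : M) (x : ExteriorAlgebra R M) :
    interiorProd d (ι R v * x) = d v • x - ι R v * interiorProd d x :=
  CliffordAlgebra.contractLeft_ι_mul d v x

theorem interiorProd_algebraMap (d : Module.Dual R M) (r : R) :
    interiorProd d (algebraMap R (ExteriorAlgebra R M) r) = 0 :=
  CliffordAlgebra.contractLeft_algebraMap (0 : QuadraticForm R M) d r

theorem interiorProd_eq_zero_of_mem_exteriorPower_zero (d : Module.Dual R M)
    {x : ExteriorAlgebra R M} (hx : x ∈ ⋀[R]^0 M) : interiorProd d x = 0 := by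
  obtain ⟨r, rfl⟩ := Submodule.mem_one.mp (by simpa only [pow_zero] using hx)
  exact interiorProd_algebraMap d r

theorem ι_mul_mem_exteriorPower (v : M) {m : ℕ} {x : ExteriorAlgebra R M} (hx : x ∈ ⋀[R]^m M) :
    ι R v * x ∈ ⋀[R]^(m + 1) M := by
  rw [exteriorPower, pow_succ']
  exact Submodule.mul_mem_mul (LinearMap.mem_range_self _ v) hx

theorem interiorProd_mem_exteriorPower (d : Module.Dual R M) {m : ℕ} {x : ExteriorAlgebra R M}
    (hx : x ∈ ⋀[R]^(m + 1) M) : interiorProd d x ∈ ⋀[R]^m M := by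
  generalize hn : m + 1 = n at hx
  induction hx using Submodule.pow_induction_on_left' generalizing m with
  | algebraMap r => omega
  | add x y n _ _ ihx ihy =>
    rw [map_add]
    exact add_mem (ihx hn) (ihy hn)
  | mem_mul v hv n x hx ih =>
    obtain ⟨v, rfl⟩ := hv
    obtain rfl : m = n := by omega
    rw [interiorProd_ι_mul]
    refine sub_mem (Submodule.smul_mem _ _ hx) ?_
    cases m with
    | zero => simp [interiorProd_eq_zero_of_mem_exteriorPower_zero d hx]
    | succ m => exact ι_mul_mem_exteriorPower v (ih rfl)

theorem ι_mul_ι_eq_neg_swap (u v : M) : ι R u * ι R v = -(ι R v * ι R u) :=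
  eq_neg_of_add_eq_zero_left (ι_add_mul_swap u v)

theorem sum_ι_mul_interiorProd_coord {I : Type*} [Fintype I] (b : Module.Basis I R M) {m : ℕ}
    {x : ExteriorAlgebra R M} (hx : x ∈ ⋀[R]^m M) :
    ∑ i, ι R (b i) * interiorProd (b.coord i) x = (m : R) • x := by
  induction hx using Submodule.pow_induction_on_left' with
  | algebraMap r => simp [interiorProd_algebraMap]
  | add x y i _ _ ihx ihy =>
    simp only [map_add, mul_add, Finset.sum_add_distrib, ihx, ihy, smul_add]
  | mem_mul v hv m x _ ih =>
    obtain ⟨v, rfl⟩ := hv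
    have anticomm (i : I) (y : ExteriorAlgebra R M) :
        ι R (b i) * (ι R v * y) = -(ι R v * (ι R (b i) * y)) := by
      rw [← mul_assoc, ι_mul_ι_eq_neg_swap, neg_mul, mul_assoc]
    calc ∑ i, ι R (b i) * interiorProd (b.coord i) (ι R v * x)
        = ι R (∑ i, b.coord i v • b i) * x +
            ι R v * ∑ i, ι R (b i) * interiorProd (b.coord i) x := by
          simp only [interiorProd_ι_mul, mul_sub, anticomm, sub_neg_eq_add, mul_smul_comm,
            Finset.sum_add_distrib, map_sum, map_smul, Finset.sum_mul, smul_mul_assoc,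
            Finset.mul_sum]
      _ = ι R v * x + (m : R) • (ι R v * x) := by
          simp only [Module.Basis.coord_apply, b.sum_repr, ih, mul_smul_comm]
      _ = ((m + 1 : ℕ) : R) • (ι R v * x) := by
          rw [Nat.cast_succ, add_smul, one_smul, add_comm]

theorem commute_ι_mul_ι (u v : M) (x : ExteriorAlgebra R M) : Commute (ι R u * ι R v) x := by
  induction x using ExteriorAlgebra.induction with
  | algebraMap r => exact (Algebra.commutes r _).symm
  | ι w =>
    calc ι R u * ι R v * ι R w = -(ι R u * ι R w * ι R v) := by
          rw [mul_assoc, ι_mul_ι_eq_neg_swap v w, mul_neg, mul_assoc]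
      _ = ι R w * (ι R u * ι R v) := by
          rw [ι_mul_ι_eq_neg_swap u w, neg_mul, neg_neg, mul_assoc]
  | mul x y hx hy => exact hx.mul_right hy
  | add x y hx hy => exact hx.add_right hy

theorem interiorProd_interiorProd_ι_mul_ι_mul_of_orthogonal {d d' : Module.Dual R M} {u v : M}
    (hdu : d u = 0) (hdv : d v = 0) (hdu' : d' u = 0) (hdv' : d' v = 0)
    (x : ExteriorAlgebra R M) :
    interiorProd d' (interiorProd d (ι R u * ι R v * x)) =
      ι R u * ι R v * interiorProd d' (interiorProd d x) := by
  simp [mul_assoc, interiorProd_ι_mul, hdu, hdv, hdu', hdv']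

theorem interiorProd_interiorProd_ι_mul_ι_mul_of_dual {d d' : Module.Dual R M} {u v : M}
    (hdu : d u = 1) (hdv : d v = 0) (hdu' : d' u = 0) (hdv' : d' v = 1)
    (x : ExteriorAlgebra R M) :
    interiorProd d' (interiorProd d (ι R u * ι R v * x)) =
      ι R u * ι R v * interiorProd d' (interiorProd d x) +
        (x - (ι R u * interiorProd d x + ι R v * interiorProd d' x)) := by
  simp only [mul_assoc, interiorProd_ι_mul, map_sub, hdu, hdv, hdu', hdv', one_smul,
    zero_smul, zero_sub, map_neg, mul_sub, mul_neg]
  abel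

end InteriorProduct

section DarbouxBasis

open ExteriorAlgebra

variable {R M J : Type*} [CommRing R] [AddCommGroup M] [Module R M] [Fintype J]

/-- The symplectic form `∑ j, b (j, 0) ∧ b (j, 1)` for which `b` is a Darboux basis. -/
noncomputable def darbouxForm (b : Module.Basis (J × Fin 2) R M) : ExteriorAlgebra R M :=
  ∑ j, ι R (b (j, 0)) * ι R (b (j, 1))

/-- The dual Lefschetz operator `Λ`: contraction with the bivector dual to `darbouxForm b`. -/
noncomputable def dualLefschetz (b : Module.Basis (J × Fin 2) R M) :
    Module.End R (ExteriorAlgebra R M) :=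
  ∑ j, interiorProd (b.coord (j, 1)) * interiorProd (b.coord (j, 0))

variable (b : Module.Basis (J × Fin 2) R M)

theorem dualLefschetz_apply (x : ExteriorAlgebra R M) :
    dualLefschetz b x =
      ∑ j, interiorProd (b.coord (j, 1)) (interiorProd (b.coord (j, 0)) x) := by
  simp [dualLefschetz]

theorem commute_darbouxForm (x : ExteriorAlgebra R M) : Commute (darbouxForm b) x :=
  Commute.sum_left _ _ _ fun _ _ => commute_ι_mul_ι _ _ _

theorem darbouxForm_mul_mem_exteriorPower {m : ℕ} {x : ExteriorAlgebra R M}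
    (hx : x ∈ ⋀[R]^m M) : darbouxForm b * x ∈ ⋀[R]^(m + 2) M := by
  rw [darbouxForm, Finset.sum_mul]
  refine sum_mem fun j _ => ?_
  rw [mul_assoc]
  exact ι_mul_mem_exteriorPower _ (ι_mul_mem_exteriorPower _ hx)

theorem dualLefschetz_mem_exteriorPower {m : ℕ} {x : ExteriorAlgebra R M}
    (hx : x ∈ ⋀[R]^(m + 2) M) : dualLefschetz b x ∈ ⋀[R]^m M := by
  rw [dualLefschetz_apply]
  exact sum_mem fun j _ => interiorProd_mem_exteriorPower _ (interiorProd_mem_exteriorPower _ hx)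

theorem dualLefschetz_eq_zero_of_mem_exteriorPower {m : ℕ} (hm : m < 2) {x : ExteriorAlgebra R M}
    (hx : x ∈ ⋀[R]^m M) : dualLefschetz b x = 0 := by
  rw [dualLefschetz_apply]
  refine Finset.sum_eq_zero fun j _ => ?_
  interval_cases m
  · rw [interiorProd_eq_zero_of_mem_exteriorPower_zero _ hx, map_zero]
  · exact interiorProd_eq_zero_of_mem_exteriorPower_zero _ (interiorProd_mem_exteriorPower _ hx)

theorem dualLefschetz_ι_mul_ι_mul (j : J) (x : ExteriorAlgebra R M) :
    dualLefschetz b (ι R (b (j, 0)) * ι R (b (j, 1)) * x) =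
      ι R (b (j, 0)) * ι R (b (j, 1)) * dualLefschetz b x +
        (x - ∑ i, ι R (b (j, i)) * interiorProd (b.coord (j, i)) x) := by
  classical
  have contract (l : J) : interiorProd (b.coord (l, 1)) (interiorProd (b.coord (l, 0))
        (ι R (b (j, 0)) * ι R (b (j, 1)) * x)) =
      ι R (b (j, 0)) * ι R (b (j, 1)) *
          interiorProd (b.coord (l, 1)) (interiorProd (b.coord (l, 0)) x) +
        if l = j then x - ∑ i, ι R (b (j, i)) * interiorProd (b.coord (j, i)) x else 0 := by
    split_ifs with hlj
    · subst hlj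
      rw [Fin.sum_univ_two]
      apply interiorProd_interiorProd_ι_mul_ι_mul_of_dual <;> simp
    · rw [add_zero]
      apply interiorProd_interiorProd_ι_mul_ι_mul_of_orthogonal <;> simp [Ne.symm hlj]
  simp only [dualLefschetz_apply, contract, Finset.sum_add_distrib, Finset.mul_sum,
    Finset.sum_ite_eq', Finset.mem_univ, if_true]

theorem dualLefschetz_darbouxForm_mul {m : ℕ} {x : ExteriorAlgebra R M} (hx : x ∈ ⋀[R]^m M) :
    dualLefschetz b (darbouxForm b * x) =
      darbouxForm b * dualLefschetz b x + ((Fintype.card J : R) - m) • x := by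
  have sum_defect : ∑ j, (x - ∑ i, ι R (b (j, i)) * interiorProd (b.coord (j, i)) x) =
      ((Fintype.card J : R) - m) • x := by
    rw [Finset.sum_sub_distrib, ← Fintype.sum_prod_type', sum_ι_mul_interiorProd_coord b hx,
      Finset.sum_const, Finset.card_univ, sub_smul, Nat.cast_smul_eq_nsmul R (Fintype.card J)]
  simp only [darbouxForm, Finset.sum_mul, map_sum, dualLefschetz_ι_mul_ι_mul,
    Finset.sum_add_distrib, sum_defect]

theorem isLefschetzPair_darbouxForm :
    IsLefschetzPair (fun m => ⋀[R]^m M) (LinearMap.mulRight R (darbouxForm b)) (dualLefschetz b)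
      (Fintype.card J) where
  raise_mem {m x} hx := by
    simpa [← (commute_darbouxForm b x).eq] using darbouxForm_mul_mem_exteriorPower b hx
  lower_mem := dualLefschetz_mem_exteriorPower b
  lower_eq_zero hm hx := dualLefschetz_eq_zero_of_mem_exteriorPower b hm hx
  lower_raise {m x} hx := by
    simpa [← (commute_darbouxForm b _).eq] using dualLefschetz_darbouxForm_mul b hx

end DarbouxBasis

theorem stmt17_general {K M J : Type*} [Field K] [CharZero K] [AddCommGroup M] [Module K M]
    [Fintype J] (b : Module.Basis (J × Fin 2) K M) {n k : ℕ} (hn : Fintype.card J = n)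
    (hkn : k ≤ n) :
    Set.BijOn (· * darbouxForm b ^ k) (⋀[K]^(n - k) M : Set (ExteriorAlgebra K M))
      (⋀[K]^(n + k) M) := by
  have hfin : Module.Finite K M := .of_basis b
  have hpair := hn ▸ isLefschetzPair_darbouxForm b
  have hrank : Module.finrank K (⋀[K]^(n - k) M) = Module.finrank K (⋀[K]^(n + k) M) := by
    rw [exteriorPower.finrank_eq, exteriorPower.finrank_eq, Module.finrank_eq_card_basis b,
      Fintype.card_prod, Fintype.card_fin, hn]
    exact Nat.choose_symm_of_eq_add (by omega)
  suffices Set.BijOn (LinearMap.mulRight K (darbouxForm b) ^ k)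
      (⋀[K]^(n - k) M : Set (ExteriorAlgebra K M)) (⋀[K]^(n + k) M) by
    rwa [LinearMap.pow_mulRight] at this
  refine bijOn_of_injOn_of_finrank_eq (fun x hx => ?_) (fun x hx y hy hxy => ?_) hrank
  · have := hpair.pow_raise_mem hx k
    rwa [show n - k + 2 * k = n + k by omega] at this
  · refine sub_eq_zero.mp
      (hpair.eq_zero_of_pow_raise_eq_zero (r := k) (by omega) (sub_mem hx hy) ?_)
    rw [map_sub, hxy, sub_self]

/-- The coordinate functionals on `ℝ^{2n}` as a Darboux basis of `symplForm n`, with `dx_j` at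
`(j, 0)` and `dy_j` at `(j, 1)`. -/
noncomputable def dualCoordBasis (n : ℕ) :
    Module.Basis (Fin n × Fin 2) ℝ (Module.Dual ℝ (Fin (2 * n) → ℝ)) :=
  (Pi.basisFun ℝ (Fin (2 * n))).dualBasis.reindex
    (finProdFinEquiv.trans (finCongr (mul_comm n 2))).symm

theorem darbouxForm_dualCoordBasis (n : ℕ) : darbouxForm (dualCoordBasis n) = symplForm n := by
  have hbasis (j : Fin n) (i : Fin 2) : dualCoordBasis n (j, i) =
      LinearMap.proj ⟨2 * j + i, by omega⟩ := by
    refine LinearMap.ext fun v => ?_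
    simp only [dualCoordBasis, Module.Basis.reindex_apply, Equiv.symm_symm,
      Module.Basis.dualBasis_apply, Pi.basisFun_repr, LinearMap.proj_apply]
    congr 1
    ext
    simp [add_comm]
  simp [darbouxForm, symplForm, hbasis]

/-- Lemma 2.9 of the paper; the Lefschetz operator. For `1 ≤ k ≤ n`,
wedging with `ω^k` is a linear isomorphism `⋀^{n-k}(ℝ^{2n})^* → ⋀^{n+k}(ℝ^{2n})^*`:
it maps `⋀^{n-k}` into `⋀^{n+k}`, is injective on `⋀^{n-k}` and surjective onto
`⋀^{n+k}`. -/
theorem stmt17 (n k : ℕ) (hk1 : 1 ≤ k) (hkn : k ≤ n) :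
    (∀ x ∈ extPow (n - k) (Module.Dual ℝ (Fin (2*n) → ℝ)),
        x * symplForm n ^ k ∈ extPow (n + k) (Module.Dual ℝ (Fin (2*n) → ℝ))) ∧
    (∀ x ∈ extPow (n - k) (Module.Dual ℝ (Fin (2*n) → ℝ)),
      ∀ y ∈ extPow (n - k) (Module.Dual ℝ (Fin (2*n) → ℝ)),
        x * symplForm n ^ k = y * symplForm n ^ k → x = y) ∧
    (∀ z ∈ extPow (n + k) (Module.Dual ℝ (Fin (2*n) → ℝ)),
      ∃ x ∈ extPow (n - k) (Module.Dual ℝ (Fin (2*n) → ℝ)),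
        x * symplForm n ^ k = z) := by
  have h := stmt17_general (dualCoordBasis n) (Fintype.card_fin n) hkn
  exact darbouxForm_dualCoordBasis n ▸ ⟨h.mapsTo, fun x hx y hy => h.injOn hx hy, h.surjOn⟩
end

section
/- Let X be a metric space, γ, α ∈ (0,1], and let f, g : X → ℝ^m be bounded γ-Hölder maps. Let u : ℝ^m → ℝ be α-Hölder, i.e. [u]_α = sup_{p ≠ q} |u(p) − u(q)|/|p−q|^α < ∞. Then: (1) u∘f is a bounded (α·γ)-Hölder function on X, with [u∘f]_{αγ} ≤ [u]_α·([f]_γ)^α; and (2) for every 0 < β < α there is a constant C, depending only on α, β, γ, such that ‖u∘f − u∘g‖_{C^{0,βγ}} ≤ C·[u]_α·( ‖f‖_{C^{0,γ}} + ‖g‖_{C^{0,γ}} )^β · ( ‖f − g‖_∞ )^{α−β}. -/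
/-!
Both `u ∘ f` and `u ∘ g` are `αγ`-Hölder, so `w = u ∘ f - u ∘ g` is `αγ`-Hölder with constant
`2 [u]_α (‖f‖ + ‖g‖)^α`. On the other hand `‖w‖_∞ ≤ [u]_α ‖f - g‖_∞^α`, i.e. `w` is `0`-Hölder with
constant `2 [u]_α ‖f - g‖_∞^α`. Interpolating between the exponents `αγ` and `0` with weights `β/α`
and `1 - β/α` gives the exponent `βγ` and the constant
`2 [u]_α (‖f‖ + ‖g‖)^β ‖f - g‖_∞^(α - β)`. For the supremum norm, split the exponent in
`|w(x)| ≤ [u]_α |f(x) - g(x)|^α` as `α = β + (α - β)`.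
-/

open Bornology Metric Set
open scoped NNReal

theorem rpow_le_rpow_mul_rpow_sub {α β t a b : ℝ} (hβ : 0 ≤ β) (hβα : β ≤ α) (ht : 0 ≤ t)
    (hta : t ≤ a) (htb : t ≤ b) : t ^ α ≤ a ^ β * b ^ (α - β) := by
  have ha : 0 ≤ a := ht.trans hta
  have hsub : 0 ≤ α - β := sub_nonneg.2 hβα
  calc t ^ α = t ^ β * t ^ (α - β) := by
        rw [← Real.rpow_add_of_nonneg ht hβ hsub, add_sub_cancel]
    _ ≤ a ^ β * b ^ (α - β) := by gcongr

theorem mul_rpow_rpow_div_mul_mul_rpow_rpow_div {α β : ℝ} (hα : 0 < α) (hβ : 0 ≤ β) (hβα : β ≤ α)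
    (A M D : ℝ≥0) :
    (A * M ^ α) ^ (β / α) * (A * D ^ α) ^ ((α - β) / α) = A * M ^ β * D ^ (α - β) := by
  have hA : A ^ (β / α) * A ^ ((α - β) / α) = A := by
    rw [← NNReal.rpow_add_of_nonneg A (div_nonneg hβ hα.le) (div_nonneg (sub_nonneg.2 hβα) hα.le),
      ← add_div, add_sub_cancel, div_self hα.ne', NNReal.rpow_one]
  rw [NNReal.mul_rpow, NNReal.mul_rpow, ← NNReal.rpow_mul, ← NNReal.rpow_mul,
    mul_div_cancel₀ _ hα.ne', mul_div_cancel₀ _ hα.ne', mul_mul_mul_comm, hA, mul_assoc]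

theorem holderWith_interpolate_zero {X Y : Type*} [PseudoEMetricSpace X] [PseudoEMetricSpace Y]
    {w : X → Y} {A M D α β γ : ℝ≥0} (hα : 0 < α) (hβα : β ≤ α)
    (hw : HolderWith (A * M ^ (α : ℝ)) (α * γ) w) (hw₀ : HolderWith (A * D ^ (α : ℝ)) 0 w) :
    HolderWith (A * M ^ (β : ℝ) * D ^ (α - β : ℝ)) (β * γ) w := by
  have hweights : β / α + (α - β) / α = 1 := by
    rw [← add_div, add_tsub_cancel_of_le hβα, div_self hα.ne']
  have hexponent : α * γ * (β / α) + 0 * ((α - β) / α) = β * γ := by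
    rw [zero_mul, add_zero, mul_right_comm, mul_div_cancel₀ _ hα.ne']
  have hconst :=
    mul_rpow_rpow_div_mul_mul_rpow_rpow_div (NNReal.coe_pos.2 hα) β.coe_nonneg hβα A M D
  have h := hw.interpolate hw₀ hweights
  rwa [hexponent, NNReal.coe_div, NNReal.coe_div, NNReal.coe_sub hβα, hconst] at h

section Holder

variable {X Y F : Type*} [PseudoMetricSpace X] [PseudoMetricSpace Y] [SeminormedAddCommGroup F]

theorem holderWith_iff_dist_le {C r : ℝ≥0} {f : X → Y} :
    HolderWith C r f ↔ ∀ x y, dist (f x) (f y) ≤ C * dist x y ^ (r : ℝ) := by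
  refine ⟨HolderWith.dist_le, fun h x y => ?_⟩
  rw [edist_nndist, edist_nndist, ← ENNReal.coe_rpow_of_nonneg _ r.coe_nonneg]
  exact_mod_cast h x y

theorem isBounded_image_of_holderWith {C r : ℝ≥0} {f : X → Y} (hf : HolderWith C r f) {s : Set X}
    (hs : IsBounded s) : IsBounded (f '' s) := by
  rw [isBounded_iff_ediam_ne_top] at hs ⊢
  exact ne_top_of_le_ne_top
    (ENNReal.mul_ne_top ENNReal.coe_ne_top (ENNReal.rpow_ne_top_of_nonneg r.coe_nonneg hs))
    (hf.ediam_image_le s)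

theorem holderWith_sub {C C' r : ℝ≥0} {f g : X → F} (hf : HolderWith C r f)
    (hg : HolderWith C' r g) : HolderWith (C + C') r (f - g) := by
  rw [holderWith_iff_dist_le] at hf hg ⊢
  intro x y
  calc dist (f x - g x) (f y - g y) ≤ dist (f x) (f y) + dist (g x) (g y) := dist_sub_sub_le ..
    _ ≤ C * dist x y ^ (r : ℝ) + C' * dist x y ^ (r : ℝ) := add_le_add (hf x y) (hg x y)
    _ = (C + C' : ℝ≥0) * dist x y ^ (r : ℝ) := by push_cast; ring

theorem holderWith_zero_of_norm_le {B : ℝ≥0} {w : X → F} (hw : ∀ x, ‖w x‖ ≤ B) :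
    HolderWith (2 * B) 0 w := by
  rw [holderWith_iff_dist_le]
  intro x y
  calc dist (w x) (w y) ≤ ‖w x‖ + ‖w y‖ := dist_le_norm_add_norm _ _
    _ ≤ B + B := add_le_add (hw x) (hw y)
    _ = (2 * B : ℝ≥0) * dist x y ^ ((0 : ℝ≥0) : ℝ) := by simp [two_mul]

variable {u : Y → F} {f g : X → Y} {K M D α β γ : ℝ≥0}

theorem holderWith_comp_sub_comp (hu : HolderWith K α u) (hf : HolderWith M γ f)
    (hg : HolderWith M γ g) :
    HolderWith (2 * K * M ^ (α : ℝ)) (α * γ) (u ∘ f - u ∘ g) := by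
  simpa only [two_mul, add_mul] using holderWith_sub (hu.comp hf) (hu.comp hg)

theorem holderWith_comp_sub_comp_of_dist_le (hα : 0 < α) (hβα : β ≤ α) (hu : HolderWith K α u)
    (hf : HolderWith M γ f) (hg : HolderWith M γ g) (hfg : ∀ x, dist (f x) (g x) ≤ D) :
    HolderWith (2 * K * M ^ (β : ℝ) * D ^ (α - β : ℝ)) (β * γ) (u ∘ f - u ∘ g) := by
  have hbound (x : X) : ‖(u ∘ f - u ∘ g) x‖ ≤ (K * D ^ (α : ℝ) : ℝ≥0) :=
    (dist_eq_norm (u (f x)) (u (g x))).symm.trans_le (mod_cast hu.dist_le_of_le (hfg x))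
  have hzero := holderWith_zero_of_norm_le hbound
  rw [← mul_assoc] at hzero
  exact holderWith_interpolate_zero hα hβα (holderWith_comp_sub_comp hu hf hg) hzero

theorem dist_le_mul_rpow_mul_rpow_of_holderWith {Z : Type*} [PseudoMetricSpace Z] {v : Y → Z}
    {a b : ℝ} (hβα : β ≤ α) (hv : HolderWith K α v) {p q : Y} (ha : dist p q ≤ a)
    (hb : dist p q ≤ b) :
    dist (v p) (v q) ≤ K * (a ^ (β : ℝ) * b ^ (α - β : ℝ)) := by
  refine (hv.dist_le p q).trans ?_
  gcongr
  exact rpow_le_rpow_mul_rpow_sub β.coe_nonneg hβα dist_nonneg ha hb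

end Holder

theorem stmt18_general {X E F : Type*} [PseudoMetricSpace X] [SeminormedAddCommGroup E]
    [SeminormedAddCommGroup F] {α β γ : ℝ} (hγ : 0 ≤ γ) (hα : 0 < α) (hβ : 0 ≤ β) (hβα : β ≤ α)
    (u : E → F) {Cu : ℝ} (hCu : 0 ≤ Cu) (hu : ∀ p q, ‖u p - u q‖ ≤ Cu * dist p q ^ α) :
    (∀ (f : X → E) (Cf : ℝ), 0 ≤ Cf →
      (∀ x y, dist (f x) (f y) ≤ Cf * dist x y ^ γ) →
      (∃ R : ℝ, ∀ x, ‖f x‖ ≤ R) →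
      ((∃ R' : ℝ, ∀ x, ‖u (f x)‖ ≤ R') ∧
        ∀ x y, ‖u (f x) - u (f y)‖ ≤ Cu * Cf ^ α * dist x y ^ (α * γ))) ∧
    (∀ (f g : X → E) (M₁ M₂ D : ℝ), 0 ≤ M₁ → 0 ≤ M₂ → 0 ≤ D →
      (∀ x, ‖f x‖ ≤ M₁) →
      (∀ x y, dist (f x) (f y) ≤ M₁ * dist x y ^ γ) →
      (∀ x, ‖g x‖ ≤ M₂) →
      (∀ x y, dist (g x) (g y) ≤ M₂ * dist x y ^ γ) →
      (∀ x, dist (f x) (g x) ≤ D) →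
      ((∀ x, ‖u (f x) - u (g x)‖ ≤ 2 * Cu * (M₁ + M₂) ^ β * D ^ (α - β)) ∧
        ∀ x y, ‖(u (f x) - u (g x)) - (u (f y) - u (g y))‖ ≤
          2 * Cu * (M₁ + M₂) ^ β * D ^ (α - β) * dist x y ^ (β * γ))) := by
  lift α to ℝ≥0 using hα.le
  lift β to ℝ≥0 using hβ
  lift γ to ℝ≥0 using hγ
  lift Cu to ℝ≥0 using hCu
  simp only [← dist_eq_norm] at hu ⊢
  rw [← holderWith_iff_dist_le] at hu
  constructor
  · intro f Cf hCf hf ⟨R, hR⟩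
    lift Cf to ℝ≥0 using hCf
    rw [← holderWith_iff_dist_le] at hf
    have hrange : IsBounded (range f) := isBounded_iff_forall_norm_le.2 ⟨R, forall_mem_range.2 hR⟩
    obtain ⟨R', hR'⟩ := (isBounded_image_of_holderWith hu hrange).exists_norm_le
    exact ⟨⟨R', fun x => hR' _ (mem_image_of_mem u (mem_range_self x))⟩,
      fun x y => mod_cast (hu.comp hf).dist_le x y⟩
  · intro f g M₁ M₂ D hM₁ hM₂ hD hfM hf hgM hg hfg
    lift M₁ to ℝ≥0 using hM₁
    lift M₂ to ℝ≥0 using hM₂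
    lift D to ℝ≥0 using hD
    rw [← holderWith_iff_dist_le] at hf hg
    have hw := holderWith_comp_sub_comp_of_dist_le hα hβα hu
      (hf.mono (le_self_add (b := M₂))) (hg.mono (le_add_self (b := M₁))) hfg
    refine ⟨fun x => ?_, fun x y => mod_cast hw.dist_le x y⟩
    have hM : dist (f x) (g x) ≤ M₁ + M₂ :=
      (dist_le_norm_add_norm _ _).trans (add_le_add (hfM x) (hgM x))
    calc dist (u (f x)) (u (g x)) ≤ Cu * ((M₁ + M₂) ^ (β : ℝ) * D ^ (α - β : ℝ)) :=
          dist_le_mul_rpow_mul_rpow_of_holderWith hβα hu hM (hfg x)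
      _ ≤ 2 * (Cu * ((M₁ + M₂) ^ (β : ℝ) * D ^ (α - β : ℝ))) :=
          le_mul_of_one_le_left (by positivity) one_le_two
      _ = 2 * Cu * (M₁ + M₂) ^ (β : ℝ) * D ^ (α - β : ℝ) := by ring

/-- Proposition 2.21 of the paper; composition with Hölder functions.
(1) If `f : X → ℝ^m` is bounded `γ`-Hölder and `u : ℝ^m → ℝ` is `α`-Hölder, then `u∘f` is
bounded `(αγ)`-Hölder with `[u∘f]_{αγ} ≤ [u]_α [f]_γ^α`.
(2) For `0 < β < α` there is `C = C(α,β,γ)` with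
`‖u∘f - u∘g‖_{C^{0,βγ}} ≤ C [u]_α (‖f‖_{C^{0,γ}} + ‖g‖_{C^{0,γ}})^β ‖f-g‖_∞^{α-β}`. -/
theorem stmt18 (α β γ : ℝ) (hγ0 : 0 < γ) (hγ1 : γ ≤ 1) (hα0 : 0 < α) (hα1 : α ≤ 1)
    (hβ0 : 0 < β) (hβα : β < α) :
    (∀ (X : Type u) [MetricSpace X], ∀ (m : ℕ)
        (f : X → EuclideanSpace ℝ (Fin m)) (u : EuclideanSpace ℝ (Fin m) → ℝ)
        (Cu Cf : ℝ), 0 ≤ Cu → 0 ≤ Cf →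
      (∀ p q : EuclideanSpace ℝ (Fin m), |u p - u q| ≤ Cu * dist p q ^ α) →
      (∀ x y : X, dist (f x) (f y) ≤ Cf * dist x y ^ γ) →
      (∃ R : ℝ, ∀ x : X, ‖f x‖ ≤ R) →
      ((∃ R' : ℝ, ∀ x : X, |u (f x)| ≤ R') ∧
        ∀ x y : X, |u (f x) - u (f y)| ≤ Cu * Cf ^ α * dist x y ^ (α * γ))) ∧
    (∃ C : ℝ, ∀ (X : Type u) [MetricSpace X], ∀ (m : ℕ)
        (f g : X → EuclideanSpace ℝ (Fin m)) (u : EuclideanSpace ℝ (Fin m) → ℝ)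
        (Cu M₁ M₂ D : ℝ), 0 ≤ Cu → 0 ≤ M₁ → 0 ≤ M₂ → 0 ≤ D →
      (∀ p q : EuclideanSpace ℝ (Fin m), |u p - u q| ≤ Cu * dist p q ^ α) →
      (∀ x : X, ‖f x‖ ≤ M₁) →
      (∀ x y : X, dist (f x) (f y) ≤ M₁ * dist x y ^ γ) →
      (∀ x : X, ‖g x‖ ≤ M₂) →
      (∀ x y : X, dist (g x) (g y) ≤ M₂ * dist x y ^ γ) →
      (∀ x : X, dist (f x) (g x) ≤ D) →
      ((∀ x : X, |u (f x) - u (g x)| ≤ C * Cu * (M₁ + M₂) ^ β * D ^ (α - β)) ∧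
        ∀ x y : X, |(u (f x) - u (g x)) - (u (f y) - u (g y))| ≤
          C * Cu * (M₁ + M₂) ^ β * D ^ (α - β) * dist x y ^ (β * γ))) := by
  exact ⟨fun _ _ _ f u _ Cf hCu hCf hu =>
    (stmt18_general hγ0.le hα0 hβ0.le hβα.le u hCu hu).1 f Cf hCf,
    2, fun _ _ _ f g u _ M₁ M₂ D hCu hM₁ hM₂ hD hu =>
    (stmt18_general hγ0.le hα0 hβ0.le hβα.le u hCu hu).2 f g M₁ M₂ D hM₁ hM₂ hD⟩
end

section
/- Let 0 < γ < 1 and let f : ℝ^n → ℝ be a bounded γ-Hölder function. Then the following are equivalent: (1) there exists a sequence of C^∞ functions f_k : ℝ^n → ℝ such that for every compact set K ⊆ ℝ^n, ‖f_k − f‖_{C^{0,γ}(K)} → 0 as k → ∞ (where ‖h‖_{C^{0,γ}(K)} = sup_K |h| + sup{ |h(x) − h(y)|/|x−y|^γ : x, y ∈ K, x ≠ y }); (2) f belongs to the class C^{0,γ+}: for every compact set K ⊆ ℝ^n, sup{ |f(x) − f(y)|/|x−y|^γ : x, y ∈ K, 0 < |x−y| ≤ s } → 0 as s → 0+. -/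
/-!
`C¹` functions are Lipschitz on compact sets, hence `o(|x - y| ^ γ)` there because `γ < 1`, and this
property survives limits in the Hölder seminorm.

Conversely, mollify `f`. Mollification averages and commutes with translations, so the mollified
functions inherit every modulus of continuity that `f` has near `K`: increments of the error over
distances at most `s` are at most `δ |x - y| ^ γ`, uniformly in the mollification parameter.
Increments over longer distances are at most twice the uniform error, which is eventually below
`δ s ^ γ ≤ δ |x - y| ^ γ`.
-/

open Filter Metric MeasureTheory Topology
open scoped Convolution NNReal

section LittleHolder

variable {X Y : Type*} [PseudoMetricSpace X] [PseudoMetricSpace Y] {γ : ℝ} {f : X → Y} {K : Set X}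

/-- The little Hölder condition on `K`: `dist (f x) (f y) = o(dist x y ^ γ)` uniformly on `K` as
`dist x y → 0`. The class `C^{0,γ+}` consists of the functions satisfying it on every compact set.
It is written without quotients, so that pairs at distance zero need no separate treatment. -/
def LittleHolderOn (γ : ℝ) (f : X → Y) (K : Set X) : Prop :=
  ∀ δ : ℝ, 0 < δ → ∃ s : ℝ, 0 < s ∧ ∀ x ∈ K, ∀ y ∈ K, dist x y ≤ s →
    dist (f x) (f y) ≤ δ * dist x y ^ γ

lemma LittleHolderOn.uniformContinuousOn (hf : LittleHolderOn γ f K) (hγ : 0 ≤ γ) :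
    UniformContinuousOn f K := by
  rw [Metric.uniformContinuousOn_iff_le]
  intro ε hε
  obtain ⟨s, hs, hfs⟩ := hf ε hε
  refine ⟨min s 1, by positivity, fun x hx y hy hxy => ?_⟩
  calc dist (f x) (f y) ≤ ε * dist x y ^ γ := hfs x hx y hy (hxy.trans (min_le_left _ _))
    _ ≤ ε := mul_le_of_le_one_right hε.le
      (Real.rpow_le_one dist_nonneg (hxy.trans (min_le_right _ _)) hγ)

lemma exists_pos_forall_mul_le_mul_rpow (L : ℝ) (hγ : γ < 1) {δ : ℝ} (hδ : 0 < δ) :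
    ∃ s : ℝ, 0 < s ∧ ∀ r, 0 ≤ r → r ≤ s → L * r ≤ δ * r ^ γ := by
  have hγ' : 0 < 1 - γ := sub_pos.2 hγ
  have hlim : Tendsto (fun r : ℝ => L * r ^ (1 - γ)) (𝓝 0) (𝓝 0) := by
    simpa only [Real.zero_rpow hγ'.ne', mul_zero] using
      (Real.continuousAt_rpow_const 0 (1 - γ) (Or.inr hγ'.le)).tendsto.const_mul L
  obtain ⟨s, hs, hLs⟩ := nhds_basis_closedBall.eventually_iff.1 (hlim.eventually (ge_mem_nhds hδ))
  refine ⟨s, hs, fun r hr hrs => ?_⟩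
  rcases hr.eq_or_lt with rfl | hr
  · simpa only [mul_zero] using mul_nonneg hδ.le (Real.rpow_nonneg le_rfl γ)
  calc L * r = L * r ^ (1 - γ) * r ^ γ := by
        rw [mul_assoc, ← Real.rpow_add hr, sub_add_cancel, Real.rpow_one]
    _ ≤ δ * r ^ γ := by
        gcongr
        exact hLs (by rwa [mem_closedBall_zero_iff, Real.norm_of_nonneg hr.le])

lemma LittleHolderOn.of_lipschitzOnWith {L : ℝ≥0} (hf : LipschitzOnWith L f K) (hγ : γ < 1) :
    LittleHolderOn γ f K := by
  intro δ hδ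
  obtain ⟨s, hs, hLs⟩ := exists_pos_forall_mul_le_mul_rpow L hγ hδ
  exact ⟨s, hs, fun x hx y hy hxy => (hf.dist_le_mul x hx y hy).trans (hLs _ dist_nonneg hxy)⟩

lemma LittleHolderOn.of_contDiff {E F : Type*} [NormedAddCommGroup E] [NormedSpace ℝ E]
    [NormedAddCommGroup F] [NormedSpace ℝ F] {f : E → F} {K : Set E} (hf : ContDiff ℝ 1 f)
    (hK : IsCompact K) (hγ : γ < 1) : LittleHolderOn γ f K := by
  obtain ⟨L, hL⟩ := LocallyLipschitzOn.exists_lipschitzOnWith_of_compact hK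
    (hf.locallyLipschitz (𝕂 := ℝ)).locallyLipschitzOn
  exact .of_lipschitzOnWith hL hγ

end LittleHolder

section HolderConvergence

variable {X Y ι : Type*} [PseudoMetricSpace X] [SeminormedAddCommGroup Y] {γ : ℝ} {F : ι → X → Y}
  {f : X → Y} {l : Filter ι} {K : Set X}

/-- Convergence of `F k` to `f` along `l` in the norm of `C^{0,γ}(K)`. Asking for both the supremum
and the Hölder seminorm of the error to be at most `δ` gives the same notion as asking this for
their sum. -/
def TendstoHolderOn (γ : ℝ) (F : ι → X → Y) (f : X → Y) (l : Filter ι) (K : Set X) : Prop :=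
  ∀ δ : ℝ, 0 < δ → ∀ᶠ k in l, (∀ x ∈ K, ‖F k x - f x‖ ≤ δ) ∧
    ∀ x ∈ K, ∀ y ∈ K, ‖(F k x - f x) - (F k y - f y)‖ ≤ δ * dist x y ^ γ

lemma TendstoHolderOn.littleHolderOn [l.NeBot] (hF : TendstoHolderOn γ F f l K)
    (hlittle : ∀ᶠ k in l, LittleHolderOn γ (F k) K) : LittleHolderOn γ f K := by
  intro δ hδ
  obtain ⟨k, ⟨-, hclose⟩, hk⟩ := ((hF (δ / 2) (half_pos hδ)).and hlittle).exists
  obtain ⟨s, hs, hks⟩ := hk (δ / 2) (half_pos hδ)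
  refine ⟨s, hs, fun x hx y hy hxy => ?_⟩
  calc dist (f x) (f y) = ‖(F k x - F k y) - ((F k x - f x) - (F k y - f y))‖ := by
        rw [dist_eq_norm]; congr 1; abel
    _ ≤ ‖F k x - F k y‖ + ‖(F k x - f x) - (F k y - f y)‖ := norm_sub_le _ _
    _ ≤ δ / 2 * dist x y ^ γ + δ / 2 * dist x y ^ γ := by
        gcongr
        · simpa only [dist_eq_norm] using hks x hx y hy hxy
        · exact hclose x hx y hy
    _ = δ * dist x y ^ γ := by ring

lemma TendstoHolderOn.of_tendstoUniformlyOn (hF : TendstoUniformlyOn F f l K) (hγ : 0 ≤ γ)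
    (hequi : ∀ δ : ℝ, 0 < δ → ∃ s : ℝ, 0 < s ∧ ∀ᶠ k in l, ∀ x ∈ K, ∀ y ∈ K, dist x y ≤ s →
      ‖(F k x - f x) - (F k y - f y)‖ ≤ δ * dist x y ^ γ) :
    TendstoHolderOn γ F f l K := by
  intro δ hδ
  obtain ⟨s, hs, hsmall⟩ := hequi δ hδ
  have hη : 0 < min δ (δ / 2 * s ^ γ) := by positivity
  filter_upwards [hsmall, Metric.tendstoUniformlyOn_iff.1 hF _ hη] with k hk hunif
  have herr : ∀ x ∈ K, ‖F k x - f x‖ ≤ min δ (δ / 2 * s ^ γ) := fun x hx => by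
    simpa only [dist_eq_norm'] using (hunif x hx).le
  refine ⟨fun x hx => (herr x hx).trans (min_le_left _ _), fun x hx y hy => ?_⟩
  rcases le_total (dist x y) s with hxy | hxy
  · exact hk x hx y hy hxy
  calc ‖(F k x - f x) - (F k y - f y)‖ ≤ ‖F k x - f x‖ + ‖F k y - f y‖ := norm_sub_le _ _
    _ ≤ δ / 2 * s ^ γ + δ / 2 * s ^ γ := add_le_add
        ((herr x hx).trans (min_le_right _ _)) ((herr y hy).trans (min_le_right _ _))
    _ = δ * s ^ γ := by ring
    _ ≤ δ * dist x y ^ γ := by gcongr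

end HolderConvergence

section Mollification

lemma convolution_sub_comp_add_right {𝕜 G E E' F : Type*} [NontriviallyNormedField 𝕜]
    [NormedAddCommGroup E] [NormedSpace 𝕜 E] [NormedAddCommGroup E'] [NormedSpace 𝕜 E']
    [NormedAddCommGroup F] [NormedSpace 𝕜 F] [NormedSpace ℝ F] [AddCommGroup G]
    [MeasurableSpace G] {μ : Measure G} {L : E →L[𝕜] E' →L[𝕜] F} {g : G → E} {f : G → E'} {x v : G}
    (hx : ConvolutionExistsAt g f x L μ) (hxv : ConvolutionExistsAt g f (x + v) L μ) :
    (g ⋆[L, μ] fun z => f z - f (z + v)) x = (g ⋆[L, μ] f) x - (g ⋆[L, μ] f) (x + v) := by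
  simp only [convolution_def, map_sub, sub_add_eq_add_sub]
  exact integral_sub hx hxv

lemma exists_seq_contDiffBump_tendsto_rOut {E : Type*} (c : E) :
    ∃ φ : ℕ → ContDiffBump c, Tendsto (fun k => (φ k).rOut) atTop (𝓝 0) :=
  ⟨fun k => ⟨1 / ((k : ℝ) + 1) / 2, 1 / ((k : ℝ) + 1), by positivity, half_lt_self (by positivity)⟩,
    tendsto_one_div_add_atTop_nhds_zero_nat⟩

variable {E F ι : Type*} [NormedAddCommGroup E] [NormedSpace ℝ E] [FiniteDimensional ℝ E]
  [NormedAddCommGroup F] [NormedSpace ℝ F] [CompleteSpace F] [MeasurableSpace E] [BorelSpace E]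
  {μ : Measure E} [μ.IsAddHaarMeasure] {f : E → F} {l : Filter ι} {K : Set E}

lemma norm_normed_convolution_sub_sub_le (φ : ContDiffBump (0 : E)) (hf : LocallyIntegrable f μ)
    {x y : E} {ε : ℝ}
    (hε : ∀ z ∈ ball x φ.rOut, dist (f z - f (z + (y - x))) (f x - f y) ≤ ε) :
    ‖((φ.normed μ ⋆[ContinuousLinearMap.lsmul ℝ ℝ, μ] f) x - f x) -
      ((φ.normed μ ⋆[ContinuousLinearMap.lsmul ℝ ℝ, μ] f) y - f y)‖ ≤ ε := by
  have hexists : ConvolutionExists (φ.normed μ) f (ContinuousLinearMap.lsmul ℝ ℝ) μ :=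
    φ.hasCompactSupport_normed.convolutionExists_left _ φ.continuous_normed hf
  have hmeas : AEStronglyMeasurable (fun z => f z - f (z + (y - x))) μ :=
    hf.aestronglyMeasurable.sub <| hf.aestronglyMeasurable.comp_quasiMeasurePreserving
      (measurePreserving_add_right μ (y - x)).quasiMeasurePreserving
  have hincr := φ.dist_normed_convolution_le (x₀ := x) (ε := ε) hmeas
    (by simpa only [add_sub_cancel] using hε)
  rwa [convolution_sub_comp_add_right (hexists _) (hexists _), add_sub_cancel, dist_eq_norm,
    sub_sub_sub_comm] at hincr

lemma tendstoUniformlyOn_normed_convolution (hK : IsCompact K) (hf : Continuous f)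
    {φ : ι → ContDiffBump (0 : E)} (hφ : Tendsto (fun k => (φ k).rOut) l (𝓝 0)) :
    TendstoUniformlyOn (fun k => (φ k).normed μ ⋆[ContinuousLinearMap.lsmul ℝ ℝ, μ] f) f l K := by
  rw [Metric.tendstoUniformlyOn_iff]
  intro ε hε
  obtain ⟨ρ, hρ, hfρ⟩ := Metric.mem_uniformity_dist.1 <|
    hK.uniformContinuousAt_of_continuousAt f (fun x _ => hf.continuousAt)
      (Metric.dist_mem_uniformity (half_pos hε))
  filter_upwards [hφ.eventually_le_const hρ] with k hk x hx
  rw [dist_comm]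
  refine ((φ k).dist_normed_convolution_le hf.aestronglyMeasurable fun z hz => ?_).trans_lt
    (half_lt_self hε)
  rw [dist_comm]
  exact (hfρ ((mem_ball'.1 hz).trans_le hk) hx).le

lemma LittleHolderOn.exists_norm_normed_convolution_sub_sub_le {γ r : ℝ}
    (hlittle : LittleHolderOn γ f (cthickening r K)) (hf : LocallyIntegrable f μ) {δ : ℝ}
    (hδ : 0 < δ) :
    ∃ s : ℝ, 0 < s ∧ ∀ φ : ContDiffBump (0 : E), φ.rOut ≤ r → ∀ x ∈ K, ∀ y ∈ K, dist x y ≤ s →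
      ‖((φ.normed μ ⋆[ContinuousLinearMap.lsmul ℝ ℝ, μ] f) x - f x) -
        ((φ.normed μ ⋆[ContinuousLinearMap.lsmul ℝ ℝ, μ] f) y - f y)‖ ≤ δ * dist x y ^ γ := by
  obtain ⟨s, hs, hfs⟩ := hlittle (δ / 2) (half_pos hδ)
  refine ⟨s, hs, fun φ hφ x hx y hy hxy => norm_normed_convolution_sub_sub_le φ hf fun z hz => ?_⟩
  have hincr : ∀ w, dist w x ≤ r → ‖f w - f (w + (y - x))‖ ≤ δ / 2 * dist x y ^ γ := by
    intro w hw
    have hdist : dist w (w + (y - x)) = dist x y := by rw [dist_self_add_right, dist_eq_norm']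
    have hdist' : dist (w + (y - x)) y = dist w x := by
      rw [dist_eq_norm, dist_eq_norm]; congr 1; abel
    rw [← dist_eq_norm, ← hdist]
    exact hfs w (mem_cthickening_of_dist_le w x r K hx hw) _
      (mem_cthickening_of_dist_le _ y r K hy (hdist'.trans_le hw)) (hdist.trans_le hxy)
  have hr : dist x x ≤ r := (dist_self x).trans_le (φ.rOut_pos.le.trans hφ)
  calc dist (f z - f (z + (y - x))) (f x - f y)
      ≤ ‖f z - f (z + (y - x))‖ + ‖f x - f y‖ := dist_le_norm_add_norm _ _
    _ ≤ δ / 2 * dist x y ^ γ + δ / 2 * dist x y ^ γ := add_le_add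
        (hincr z ((mem_ball.1 hz).le.trans hφ)) (by simpa only [add_sub_cancel] using hincr x hr)
    _ = δ * dist x y ^ γ := by ring

lemma LittleHolderOn.tendstoHolderOn_normed_convolution {γ r : ℝ} (hγ : 0 ≤ γ) (hr : 0 < r)
    (hlittle : LittleHolderOn γ f (cthickening r K)) (hK : IsCompact K) (hf : Continuous f)
    {φ : ι → ContDiffBump (0 : E)} (hφ : Tendsto (fun k => (φ k).rOut) l (𝓝 0)) :
    TendstoHolderOn γ (fun k => (φ k).normed μ ⋆[ContinuousLinearMap.lsmul ℝ ℝ, μ] f) f l K := by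
  refine .of_tendstoUniformlyOn (tendstoUniformlyOn_normed_convolution hK hf hφ) hγ fun δ hδ => ?_
  obtain ⟨s, hs, hsmall⟩ :=
    hlittle.exists_norm_normed_convolution_sub_sub_le (μ := μ) hf.locallyIntegrable hδ
  exact ⟨s, hs, (hφ.eventually_le_const hr).mono fun k hk => hsmall (φ k) hk⟩

end Mollification

theorem stmt19_general {E F : Type*} [NormedAddCommGroup E] [NormedSpace ℝ E]
    [FiniteDimensional ℝ E] [NormedAddCommGroup F] [NormedSpace ℝ F] [CompleteSpace F] {γ : ℝ}
    (hγ0 : 0 ≤ γ) (hγ1 : γ < 1) (f : E → F) :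
    (∃ fk : ℕ → E → F, (∀ k, ContDiff ℝ (⊤ : ℕ∞) (fk k)) ∧
      ∀ K : Set E, IsCompact K → TendstoHolderOn γ fk f atTop K) ↔
    ∀ K : Set E, IsCompact K → LittleHolderOn γ f K := by
  constructor
  · rintro ⟨fk, hsmooth, happrox⟩ K hK
    refine (happrox K hK).littleHolderOn (Eventually.of_forall fun k => ?_)
    exact .of_contDiff ((hsmooth k).of_le (mod_cast le_top)) hK hγ1
  · intro hlittle
    have hf : Continuous f := continuous_iff_continuousAt.2 fun x => by
      obtain ⟨K, hK, hx⟩ := exists_compact_mem_nhds x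
      exact ((hlittle K hK).uniformContinuousOn hγ0).continuousOn.continuousAt hx
    borelize E
    obtain ⟨φ, hφ⟩ := exists_seq_contDiffBump_tendsto_rOut (0 : E)
    refine ⟨fun k => (φ k).normed Measure.addHaar ⋆[ContinuousLinearMap.lsmul ℝ ℝ,
      Measure.addHaar] f, fun k => ?_, fun K hK => ?_⟩
    · exact (φ k).hasCompactSupport_normed.contDiff_convolution_left _ (φ k).contDiff_normed
        hf.locallyIntegrable
    · exact (hlittle _ hK.cthickening).tendstoHolderOn_normed_convolution hγ0 one_pos hK hf hφ

/-- Proposition 2.16 of the paper. Let `0 < γ < 1`. A bounded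
`γ`-Hölder function `f : ℝ^n → ℝ` can be approximated by smooth functions in the
`C^{0,γ}(K)` norm on every compact set `K` if and only if `f` belongs to the class
`C^{0,γ+}`. -/
theorem stmt19 (n : ℕ) (γ : ℝ) (hγ0 : 0 < γ) (hγ1 : γ < 1)
    (f : EuclideanSpace ℝ (Fin n) → ℝ)
    (hb : ∃ B : ℝ, ∀ x, |f x| ≤ B)
    (hH : ∃ C : ℝ, ∀ x y, |f x - f y| ≤ C * dist x y ^ γ) :
    (∃ fk : ℕ → EuclideanSpace ℝ (Fin n) → ℝ,
      (∀ k, ContDiff ℝ (⊤ : ℕ∞) (fk k)) ∧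
      ∀ K : Set (EuclideanSpace ℝ (Fin n)), IsCompact K →
        ∀ δ : ℝ, 0 < δ → ∃ N : ℕ, ∀ k ≥ N,
          (∀ x ∈ K, |fk k x - f x| ≤ δ) ∧
          (∀ x ∈ K, ∀ y ∈ K, |(fk k x - f x) - (fk k y - f y)| ≤ δ * dist x y ^ γ))
    ↔
    (∀ K : Set (EuclideanSpace ℝ (Fin n)), IsCompact K →
      ∀ δ : ℝ, 0 < δ → ∃ s : ℝ, 0 < s ∧ ∀ x ∈ K, ∀ y ∈ K, dist x y ≤ s →
        |f x - f y| ≤ δ * dist x y ^ γ) := by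
  simpa only [TendstoHolderOn, LittleHolderOn, eventually_atTop, Real.norm_eq_abs, Real.dist_eq]
    using stmt19_general hγ0.le hγ1 f
end
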